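/- arXiv:2408.04320 — 2 statements merged into one kernel-verified Lean document; each statement's English description precedes it below -/
import Mathlib

section
/- For all real numbers $A$, $B$, $C$, setting $\eta = \sqrt{A^2 + B^2 + C^2}$, one has $\frac{1}{2\pi^2} \int_0^{\pi} \int_0^{2\pi} \sin^2\big(A \sin\theta \cos\phi + B \sin\theta \sin\phi + C \cos\theta\big)\, d\phi\, d\theta = \frac{1}{2}\Big(1 - J_0(\eta + C)\, J_0(\eta - C)\Big)$. -/
/-- The Bessel function of the first kind of order zero, defined by its
integral representation `J₀(x) = (1/2π) ∫₀^{2π} cos(x sin t) dt`. -/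
noncomputable def besselJ0 (x : ℝ) : ℝ :=
  (1 / (2 * Real.pi)) * ∫ t in (0 : ℝ)..(2 * Real.pi), Real.cos (x * Real.sin t)

open MeasureTheory in
lemma aux_swap (f : ℝ → ℝ → ℝ) (hf : Continuous (Function.uncurry f)) (a b : ℝ) :
    ∫ x in a..b, ∫ y in (0:ℝ)..(2 * Real.pi), f x y =
      ∫ y in (0:ℝ)..(2 * Real.pi), ∫ x in a..b, f x y := by
  have hp : (0:ℝ) ≤ 2 * Real.pi := by positivity
  simp only [intervalIntegral.integral_of_le hp]
  apply intervalIntegral_integral_swap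
  rw [Measure.prod_restrict]
  apply (hf.continuousOn.integrableOn_compact
    (isCompact_uIcc.prod isCompact_Icc)).mono_set
  exact Set.prod_mono Set.uIoc_subset_uIcc Set.Ioc_subset_Icc_self

lemma aux_shift (f : ℝ → ℝ) (hf : Function.Periodic f (2 * Real.pi)) (d : ℝ) :
    ∫ t in (0:ℝ)..(2 * Real.pi), f (t + d) = ∫ t in (0:ℝ)..(2 * Real.pi), f t := by
  rw [intervalIntegral.integral_comp_add_right]
  have := hf.intervalIntegral_add_eq d 0
  rw [zero_add] at this ⊢
  rw [← this, add_comm]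

lemma aux_rot (F : ℝ → ℝ) (a b : ℝ) :
    ∫ t in (0:ℝ)..(2 * Real.pi), F (a * Real.sin t + b * Real.cos t) =
    ∫ t in (0:ℝ)..(2 * Real.pi), F (Real.sqrt (a ^ 2 + b ^ 2) * Real.sin t) := by
  obtain ⟨d, h1, h2⟩ : ∃ d, a = Real.sqrt (a ^ 2 + b ^ 2) * Real.cos d ∧
      b = Real.sqrt (a ^ 2 + b ^ 2) * Real.sin d := by
    refine ⟨Complex.arg ⟨a, b⟩, ?_, ?_⟩
    · have := Complex.norm_mul_cos_arg ⟨a, b⟩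
      rw [Complex.norm_eq_sqrt_sq_add_sq] at this
      exact this.symm
    · have := Complex.norm_mul_sin_arg ⟨a, b⟩
      rw [Complex.norm_eq_sqrt_sq_add_sq] at this
      exact this.symm
  rw [← aux_shift (fun t => F (Real.sqrt (a ^ 2 + b ^ 2) * Real.sin t)) _ d]
  · congr 1
    ext t
    rw [Real.sin_add]
    congr 1
    linear_combination Real.sin t * h1 + Real.cos t * h2
  · intro t
    simp only [Real.sin_add_two_pi]

lemma aux_half (a b : ℝ) :
    ∫ t in (0:ℝ)..Real.pi, Real.cos (a * Real.sin t + b * Real.cos t) =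
    (1 / 2) * ∫ t in (0:ℝ)..(2 * Real.pi), Real.cos (a * Real.sin t + b * Real.cos t) := by
  have hi : ∀ u v : ℝ, IntervalIntegrable
      (fun t => Real.cos (a * Real.sin t + b * Real.cos t)) MeasureTheory.volume u v :=
    fun u v => Continuous.intervalIntegrable (by fun_prop) u v
  rw [← intervalIntegral.integral_add_adjacent_intervals (hi 0 Real.pi) (hi Real.pi (2 * Real.pi))]
  have h : ∫ t in (0:ℝ)..Real.pi, Real.cos (a * Real.sin (t + Real.pi) + b * Real.cos (t + Real.pi))
      = ∫ t in Real.pi..(2 * Real.pi), Real.cos (a * Real.sin t + b * Real.cos t) := by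
    rw [intervalIntegral.integral_comp_add_right
      (fun t => Real.cos (a * Real.sin t + b * Real.cos t)), zero_add, two_mul]
  rw [← h]
  have h' : ∀ t, Real.cos (a * Real.sin (t + Real.pi) + b * Real.cos (t + Real.pi))
      = Real.cos (a * Real.sin t + b * Real.cos t) := by
    intro t
    rw [Real.sin_add_pi, Real.cos_add_pi, ← Real.cos_neg]
    congr 1
    ring
  simp only [h']
  ring

lemma aux_odd (y : ℝ) : ∫ t in (0:ℝ)..(2 * Real.pi), Real.sin (y * Real.sin t) = 0 := by
  have h := intervalIntegral.integral_comp_sub_left (a := 0) (b := 2 * Real.pi)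
    (fun t => Real.sin (y * Real.sin t)) (2 * Real.pi)
  simp only [Real.sin_two_pi_sub, mul_neg, Real.sin_neg, intervalIntegral.integral_neg,
    sub_zero, sub_self] at h
  linarith

lemma aux_double (H : ℝ → ℝ) (hH : Continuous H) :
    ∫ t in (0:ℝ)..(2 * Real.pi), H (-Real.cos (2 * t)) =
    ∫ t in (0:ℝ)..(2 * Real.pi), H (Real.cos t) := by
  have hp : Function.Periodic (fun t => H (-Real.cos t)) (2 * Real.pi) := by
    intro t
    simp only [Real.cos_add_two_pi]
  rw [intervalIntegral.integral_comp_mul_left (fun t => H (-Real.cos t)) two_ne_zero]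
  have hi : ∀ u v : ℝ, IntervalIntegrable
      (fun t => H (-Real.cos t)) MeasureTheory.volume u v :=
    fun u v => Continuous.intervalIntegrable (by fun_prop) u v
  rw [mul_zero, ← intervalIntegral.integral_add_adjacent_intervals (hi 0 (2 * Real.pi)) (hi _ _)]
  have h1 := hp.intervalIntegral_add_eq (2 * Real.pi) 0
  rw [zero_add, ← two_mul] at h1
  rw [h1]
  have h2 := aux_shift (fun t => H (Real.cos t)) (fun t => by simp only [Real.cos_add_two_pi])
    Real.pi
  simp only [Real.cos_add_pi] at h2
  rw [h2, smul_eq_mul]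
  ring

lemma aux_prod (x y : ℝ) :
    (∫ t in (0:ℝ)..(2 * Real.pi), Real.cos (x * Real.sin t)) *
    (∫ t in (0:ℝ)..(2 * Real.pi), Real.cos (y * Real.sin t)) =
    ∫ w in (0:ℝ)..(2 * Real.pi), ∫ t in (0:ℝ)..(2 * Real.pi),
      Real.cos (Real.sqrt (x ^ 2 + y ^ 2 + 2 * (x * y) * Real.cos w) * Real.sin t) := by
  have h1 : ∀ t : ℝ, ∫ s in (0:ℝ)..(2 * Real.pi), Real.cos (x * Real.sin (s + t) + y * Real.sin t)
      = (∫ s in (0:ℝ)..(2 * Real.pi), Real.cos (x * Real.sin s)) * Real.cos (y * Real.sin t) := by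
    intro t
    rw [aux_shift (fun s => Real.cos (x * Real.sin s + y * Real.sin t))
      (fun s => by simp only [Real.sin_add_two_pi])]
    simp only [Real.cos_add]
    rw [intervalIntegral.integral_sub (Continuous.intervalIntegrable (by fun_prop) _ _)
      (Continuous.intervalIntegrable (by fun_prop) _ _),
      intervalIntegral.integral_mul_const, intervalIntegral.integral_mul_const, aux_odd]
    ring
  rw [← intervalIntegral.integral_const_mul]
  simp only [← h1]
  rw [aux_swap _ (by unfold Function.uncurry; fun_prop)]
  congr 1
  ext w
  have h2 := aux_rot Real.cos (x * Real.cos w + y) (x * Real.sin w)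
  have h3 : (x * Real.cos w + y) ^ 2 + (x * Real.sin w) ^ 2 =
      x ^ 2 + y ^ 2 + 2 * (x * y) * Real.cos w := by
    linear_combination x ^ 2 * Real.sin_sq_add_cos_sq w
  rw [h3] at h2
  rw [← h2]
  congr 1
  ext t
  rw [Real.sin_add]
  congr 1
  ring

lemma aux_main (A B C : ℝ) :
    ∫ θ in (0 : ℝ)..Real.pi, ∫ φ in (0 : ℝ)..(2 * Real.pi),
      Real.cos (2 * (A * Real.sin θ * Real.cos φ + B * Real.sin θ * Real.sin φ +
            C * Real.cos θ)) =
    (1 / 2) * ((∫ t in (0:ℝ)..(2 * Real.pi),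
        Real.cos ((Real.sqrt (A ^ 2 + B ^ 2 + C ^ 2) + C) * Real.sin t)) *
      (∫ t in (0:ℝ)..(2 * Real.pi),
        Real.cos ((Real.sqrt (A ^ 2 + B ^ 2 + C ^ 2) - C) * Real.sin t))) := by
  have hη : Real.sqrt (A ^ 2 + B ^ 2 + C ^ 2) ^ 2 = A ^ 2 + B ^ 2 + C ^ 2 :=
    Real.sq_sqrt (by positivity)
  have hρ : Real.sqrt (B ^ 2 + A ^ 2) ^ 2 = B ^ 2 + A ^ 2 := Real.sq_sqrt (by positivity)
  set η := Real.sqrt (A ^ 2 + B ^ 2 + C ^ 2)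
  set ρ := Real.sqrt (B ^ 2 + A ^ 2) with hρd
  have h1 : ∀ θ : ℝ, ∫ φ in (0 : ℝ)..(2 * Real.pi),
      Real.cos (2 * (A * Real.sin θ * Real.cos φ + B * Real.sin θ * Real.sin φ +
            C * Real.cos θ)) = ∫ φ in (0 : ℝ)..(2 * Real.pi),
      Real.cos ((2 * ρ * Real.sin φ) * Real.sin θ + (2 * C) * Real.cos θ) := by
    intro θ
    have h := aux_rot (fun z => Real.cos (2 * Real.sin θ * z + (2 * C) * Real.cos θ)) B A
    rw [← hρd] at h
    convert h using 3
    · congr 1; ring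
    · congr 1; ring
  simp only [h1]
  rw [aux_swap _ (by unfold Function.uncurry; fun_prop)]
  simp only [aux_half, intervalIntegral.integral_const_mul]
  rw [aux_prod]
  congr 1
  rw [← aux_double (fun c => ∫ t in (0:ℝ)..(2 * Real.pi),
      Real.cos (Real.sqrt ((η + C) ^ 2 + (η - C) ^ 2 + 2 * ((η + C) * (η - C)) * c) * Real.sin t))]
  · congr 1
    ext φ
    rw [aux_rot Real.cos]
    have : (2 * ρ * Real.sin φ) ^ 2 + (2 * C) ^ 2 =
        (η + C) ^ 2 + (η - C) ^ 2 + 2 * ((η + C) * (η - C)) * -Real.cos (2 * φ) := by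
      rw [Real.cos_two_mul, Real.cos_sq']
      linear_combination 4 * Real.sin φ ^ 2 * hρ - 4 * Real.sin φ ^ 2 * hη
    rw [this]
  · apply intervalIntegral.continuous_parametric_intervalIntegral_of_continuous'
    unfold Function.uncurry
    fun_prop

/-- Analytic core of Lemma 4 of the paper: the average of `sin²` of a linear
phase in a random direction equals `½(1 - J₀(η + C) J₀(η - C))` with
`η = √(A² + B² + C²)`. -/
theorem expectation_sin_sq_random_direction (A B C : ℝ) :
    (1 / (2 * Real.pi ^ 2)) *
        ∫ θ in (0 : ℝ)..Real.pi, ∫ φ in (0 : ℝ)..(2 * Real.pi),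
          Real.sin (A * Real.sin θ * Real.cos φ + B * Real.sin θ * Real.sin φ +
            C * Real.cos θ) ^ 2 =
      (1 / 2) * (1 - besselJ0 (Real.sqrt (A ^ 2 + B ^ 2 + C ^ 2) + C) *
        besselJ0 (Real.sqrt (A ^ 2 + B ^ 2 + C ^ 2) - C)) := by
  have hm := aux_main A B C
  have h1 : ∀ θ : ℝ, ∫ φ in (0 : ℝ)..(2 * Real.pi),
          Real.sin (A * Real.sin θ * Real.cos φ + B * Real.sin θ * Real.sin φ +
            C * Real.cos θ) ^ 2 = Real.pi - (1 / 2) * ∫ φ in (0 : ℝ)..(2 * Real.pi),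
      Real.cos (2 * (A * Real.sin θ * Real.cos φ + B * Real.sin θ * Real.sin φ +
            C * Real.cos θ)) := by
    intro θ
    have h0 : ∀ z : ℝ, Real.sin z ^ 2 = 1 / 2 - (1 / 2) * Real.cos (2 * z) := by
      intro z
      rw [Real.sin_sq_eq_half_sub]
      ring
    simp only [h0]
    rw [intervalIntegral.integral_sub (Continuous.intervalIntegrable (by fun_prop) _ _)
      (Continuous.intervalIntegrable (by fun_prop) _ _), intervalIntegral.integral_const_mul,
      intervalIntegral.integral_const, smul_eq_mul]
    ring
  simp only [h1]
  rw [intervalIntegral.integral_sub (Continuous.intervalIntegrable (by fun_prop) _ _),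
    intervalIntegral.integral_const_mul, hm, intervalIntegral.integral_const, smul_eq_mul]
  · unfold besselJ0
    have := Real.pi_ne_zero
    field_simp
    ring
  · apply Continuous.intervalIntegrable
    apply Continuous.mul continuous_const
    apply intervalIntegral.continuous_parametric_intervalIntegral_of_continuous'
    unfold Function.uncurry
    fun_prop
end

section
/- For all real numbers $D_h$ and $D_v$, $\frac{1}{2\pi^2} \int_0^{\pi} \int_0^{2\pi} \cos\big(2 D_h \sin\theta \sin\phi + 2 D_v \cos\theta\big)\, d\phi\, d\theta = J_0\!\Big(\sqrt{D_h^2 + D_v^2} + D_v\Big)\, J_0\!\Big(\sqrt{D_h^2 + D_v^2} - D_v\Big)$. -/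
lemma bj_shift (f : ℝ → ℝ) (hf : Function.Periodic f (2 * Real.pi)) (c : ℝ) :
    ∫ t in (0 : ℝ)..(2 * Real.pi), f (t + c) = ∫ t in (0 : ℝ)..(2 * Real.pi), f t := by
  rw [intervalIntegral.integral_comp_add_right]
  have := hf.intervalIntegral_add_eq c 0
  simpa [add_comm] using this

lemma bj_refl (f : ℝ → ℝ) (hf : Function.Periodic f (2 * Real.pi)) (c : ℝ) :
    ∫ t in (0 : ℝ)..(2 * Real.pi), f (c - t) = ∫ t in (0 : ℝ)..(2 * Real.pi), f t := by
  rw [intervalIntegral.integral_comp_sub_left]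
  have := hf.intervalIntegral_add_eq (c - 2 * Real.pi) 0
  simpa using this

lemma bj_amp (a b : ℝ) :
    ∫ t in (0 : ℝ)..(2 * Real.pi), Real.cos (a * Real.sin t + b * Real.cos t)
      = ∫ t in (0 : ℝ)..(2 * Real.pi), Real.cos (Real.sqrt (a ^ 2 + b ^ 2) * Real.sin t) := by
  have h1 : ‖(⟨a, b⟩ : ℂ)‖ = Real.sqrt (a ^ 2 + b ^ 2) := by
    rw [Complex.norm_eq_sqrt_sq_add_sq]
  have h2 := Complex.norm_mul_cos_arg (⟨a, b⟩ : ℂ)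
  have h3 := Complex.norm_mul_sin_arg (⟨a, b⟩ : ℂ)
  rw [h1] at h2 h3
  simp only at h2 h3
  rw [← bj_shift (fun t => Real.cos (Real.sqrt (a ^ 2 + b ^ 2) * Real.sin t)) (by
    intro t; simp) (Complex.arg ⟨a, b⟩)]
  congr 1
  ext t
  congr 1
  rw [Real.sin_add]
  linear_combination (-Real.sin t) * h2 - Real.cos t * h3

lemma bj_swap (f : ℝ → ℝ → ℝ) (hf : Continuous (Function.uncurry f)) (a b c d : ℝ) :
    ∫ x in a..b, ∫ y in c..d, f x y = ∫ y in c..d, ∫ x in a..b, f x y := by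
  apply MeasureTheory.intervalIntegral_intervalIntegral_swap
  exact (hf.continuousOn.integrableOn_compact
    ((isCompact_uIcc (a := a) (b := b)).prod (isCompact_uIcc (a := c) (b := d)))).mono_set
    (Set.prod_mono Set.uIoc_subset_uIcc Set.uIoc_subset_uIcc)

lemma bj_sin (y : ℝ) :
    ∫ t in (0 : ℝ)..(2 * Real.pi), Real.sin (y * Real.sin t) = 0 := by
  have h := bj_refl (fun t => Real.sin (y * Real.sin t)) (by intro t; simp) 0
  simp at h
  linarith

lemma bj_prod (x y : ℝ) :
    (∫ t in (0 : ℝ)..(2 * Real.pi), Real.cos (x * Real.sin t)) *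
      (∫ t in (0 : ℝ)..(2 * Real.pi), Real.cos (y * Real.sin t)) =
    ∫ s in (0 : ℝ)..(2 * Real.pi), ∫ t in (0 : ℝ)..(2 * Real.pi),
      Real.cos (x * Real.sin s + y * Real.sin t) := by
  rw [← intervalIntegral.integral_mul_const]
  congr 1
  ext s
  simp_rw [Real.cos_add]
  rw [intervalIntegral.integral_sub
      (Continuous.intervalIntegrable (by fun_prop) _ _)
      (Continuous.intervalIntegrable (by fun_prop) _ _),
    intervalIntegral.integral_const_mul, intervalIntegral.integral_const_mul, bj_sin]
  ring

lemma bj_rhs (r h D : ℝ) (hr : r ^ 2 = h ^ 2 + D ^ 2) :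
    ∫ s in (0 : ℝ)..(2 * Real.pi), ∫ t in (0 : ℝ)..(2 * Real.pi),
      Real.cos ((r + D) * Real.sin s + (r - D) * Real.sin t) =
    ∫ w in (0 : ℝ)..(2 * Real.pi), ∫ t in (0 : ℝ)..(2 * Real.pi),
      Real.cos (2 * h * Real.sin (w / 2) * Real.sin t + 2 * D * Real.cos t) := by
  have e1 : ∀ s : ℝ, ∫ t in (0 : ℝ)..(2 * Real.pi),
      Real.cos ((r + D) * Real.sin s + (r - D) * Real.sin t) =
      ∫ w in (0 : ℝ)..(2 * Real.pi),
      Real.cos ((r + D) * Real.sin s + (r - D) * Real.sin (w - s)) := fun s =>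
    (bj_shift (fun t => Real.cos ((r + D) * Real.sin s + (r - D) * Real.sin t))
      (by intro t; simp) (-s)).symm
  simp_rw [e1]
  rw [bj_swap _ (by unfold Function.uncurry; fun_prop)]
  congr 1
  ext w
  rw [← bj_shift (fun s => Real.cos ((r + D) * Real.sin s + (r - D) * Real.sin (w - s)))
      (by
        intro s
        have : w - (s + 2 * Real.pi) = w - s - 2 * Real.pi := by ring
        simp [this]) (w / 2)]
  have e2 : ∀ s : ℝ, (r + D) * Real.sin (s + w / 2) + (r - D) * Real.sin (w - (s + w / 2))
      = (2 * D * Real.cos (w / 2)) * Real.sin s + (2 * r * Real.sin (w / 2)) * Real.cos s := by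
    intro s
    have : w - (s + w / 2) = w / 2 - s := by ring
    rw [this, Real.sin_add, Real.sin_sub]
    ring
  simp_rw [e2]
  rw [bj_amp, bj_amp]
  have : (2 * D * Real.cos (w / 2)) ^ 2 + (2 * r * Real.sin (w / 2)) ^ 2
      = (2 * h * Real.sin (w / 2)) ^ 2 + (2 * D) ^ 2 := by
    have := Real.sin_sq_add_cos_sq (w / 2)
    linear_combination 4 * Real.sin (w / 2) ^ 2 * hr + 4 * D ^ 2 * this
  rw [this]

lemma bj_half (K : ℝ → ℝ) (hK : Continuous K) (hp : Function.Periodic K Real.pi) :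
    ∫ w in (0 : ℝ)..(2 * Real.pi), K (w / 2) = ∫ w in (0 : ℝ)..(2 * Real.pi), K w := by
  rw [intervalIntegral.integral_comp_div _ two_ne_zero,
    ← intervalIntegral.integral_add_adjacent_intervals (a := 0) (b := Real.pi) (c := 2 * Real.pi)
      (hK.intervalIntegrable _ _) (hK.intervalIntegrable _ _)]
  have := hp.intervalIntegral_add_eq Real.pi 0
  rw [← two_mul, zero_add] at this
  rw [this]
  simp [two_mul]

lemma bj_lhs (h D : ℝ) :
    2 * ∫ θ in (0 : ℝ)..Real.pi, ∫ φ in (0 : ℝ)..(2 * Real.pi),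
      Real.cos (2 * h * Real.sin θ * Real.sin φ + 2 * D * Real.cos θ) =
    ∫ θ in (0 : ℝ)..(2 * Real.pi), ∫ φ in (0 : ℝ)..(2 * Real.pi),
      Real.cos (2 * h * Real.sin θ * Real.sin φ + 2 * D * Real.cos θ) := by
  set F : ℝ → ℝ := fun θ => ∫ φ in (0 : ℝ)..(2 * Real.pi),
      Real.cos (2 * h * Real.sin θ * Real.sin φ + 2 * D * Real.cos θ) with hF
  have hc : Continuous F := by
    apply intervalIntegral.continuous_parametric_intervalIntegral_of_continuous'
    unfold Function.uncurry; fun_prop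
  have hs : ∀ θ, F (2 * Real.pi - θ) = F θ := by
    intro θ
    simp only [hF]
    rw [← bj_refl (fun φ => Real.cos (2 * h * Real.sin θ * Real.sin φ + 2 * D * Real.cos θ))
      (by intro t; simp) 0]
    simp
  change 2 * ∫ θ in (0 : ℝ)..Real.pi, F θ = ∫ θ in (0 : ℝ)..(2 * Real.pi), F θ
  rw [← intervalIntegral.integral_add_adjacent_intervals (a := 0) (b := Real.pi) (c := 2 * Real.pi)
      (hc.intervalIntegrable _ _) (hc.intervalIntegrable _ _)]
  have : ∫ θ in (0 : ℝ)..Real.pi, F (2 * Real.pi - θ) = ∫ θ in Real.pi..(2 * Real.pi), F θ := by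
    rw [intervalIntegral.integral_comp_sub_left]
    congr 1 <;> ring
  rw [← this]
  simp_rw [hs]
  ring

/-- Eq. (73) of the paper (closed form of `E{cos b_p}`), with departure
elevation uniform on `[0, π]` and departure azimuth uniform on `[0, 2π]`,
independently. -/
theorem expectation_cos_bp_closed_form (Dh Dv : ℝ) :
    (1 / (2 * Real.pi ^ 2)) *
        ∫ θ in (0 : ℝ)..Real.pi, ∫ φ in (0 : ℝ)..(2 * Real.pi),
          Real.cos (2 * Dh * Real.sin θ * Real.sin φ + 2 * Dv * Real.cos θ) =
      besselJ0 (Real.sqrt (Dh ^ 2 + Dv ^ 2) + Dv) *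
        besselJ0 (Real.sqrt (Dh ^ 2 + Dv ^ 2) - Dv) := by
  have h1 := bj_lhs Dh Dv
  have h2 := bj_prod (Real.sqrt (Dh ^ 2 + Dv ^ 2) + Dv) (Real.sqrt (Dh ^ 2 + Dv ^ 2) - Dv)
  rw [bj_rhs _ Dh Dv (Real.sq_sqrt (by positivity))] at h2
  have h3 := bj_half (fun w => ∫ t in (0 : ℝ)..(2 * Real.pi),
      Real.cos (2 * Dh * Real.sin w * Real.sin t + 2 * Dv * Real.cos t))
    (by
      apply intervalIntegral.continuous_parametric_intervalIntegral_of_continuous'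
      unfold Function.uncurry; fun_prop)
    (by
      intro w
      simp only
      rw [bj_amp, bj_amp]
      simp)
  rw [h3] at h2
  rw [bj_swap _ (by unfold Function.uncurry; fun_prop)] at h2
  have h5 : ∫ θ in (0 : ℝ)..(2 * Real.pi), ∫ φ in (0 : ℝ)..(2 * Real.pi),
      Real.cos (2 * Dh * Real.sin θ * Real.sin φ + 2 * Dv * Real.cos θ) =
      ∫ θ in (0 : ℝ)..(2 * Real.pi), ∫ φ in (0 : ℝ)..(2 * Real.pi),
      Real.cos (2 * Dh * Real.sin φ * Real.sin θ + 2 * Dv * Real.cos θ) := by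
    simp only [mul_right_comm]
  rw [← h5, ← h1] at h2
  unfold besselJ0
  have hpi := Real.pi_ne_zero
  rw [mul_mul_mul_comm, h2]
  field_simp
end
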